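/- arXiv:2505.22438 — 2 statements merged into one kernel-verified Lean document; each statement's English description precedes it below -/
import Mathlib

section
/- Let α be a finite type, let q and p be probability mass functions on α with p a > 0 for every a with q a > 0, and let π : α → β be a map into a finite type β (the synonymous mapping). Define the synset probability P : β → ℝ by P b = ∑_{a : π a = b} p a. Then the partial semantic KL divergence D_{KL,s}[q‖p_s] = ∑_{a} q a * log (q a / P (π a)) is at most the Kullback–Leibler divergence D_{KL}[q‖p] = ∑_{a} q a * log (q a / p a), where terms with q a = 0 are interpreted as 0. -/
open BigOperators

theorem mul_log_div_le_mul_log_div_of_le {x y z : ℝ} (hx : 0 ≤ x) (hy : 0 < x → 0 < y)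
    (hyz : y ≤ z) : x * Real.log (x / z) ≤ x * Real.log (x / y) := by
  rcases hx.eq_or_lt with rfl | hx_pos
  · simp
  · have hy_pos : 0 < y := hy hx_pos
    have hz_pos : 0 < z := hy_pos.trans_le hyz
    gcongr

theorem sum_mul_log_div_le_sum_mul_log_div_of_le {ι : Type*} {s : Finset ι} {q p r : ι → ℝ}
    (hq : ∀ i ∈ s, 0 ≤ q i) (hqp : ∀ i ∈ s, 0 < q i → 0 < p i) (hpr : ∀ i ∈ s, p i ≤ r i) :
    ∑ i ∈ s, q i * Real.log (q i / r i) ≤ ∑ i ∈ s, q i * Real.log (q i / p i) :=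
  Finset.sum_le_sum fun i hi =>
    mul_log_div_le_mul_log_div_of_le (hq i hi) (hqp i hi) (hpr i hi)

theorem le_sum_filter_fiber {ι κ M : Type*} [DecidableEq κ] [AddCommMonoid M] [PartialOrder M]
    [IsOrderedAddMonoid M] {s : Finset ι} {f : ι → M} {g : ι → κ} {i : ι} (hi : i ∈ s)
    (hf : ∀ j ∈ s, g j = g i → 0 ≤ f j) : f i ≤ ∑ j ∈ s with g j = g i, f j :=
  Finset.single_le_sum (fun j hj => (Finset.mem_filter.mp hj).elim (hf j))
    (Finset.mem_filter.mpr ⟨hi, rfl⟩)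

theorem partial_semantic_KL_le_KL_general
    {α β : Type*} [Fintype α] [DecidableEq β]
    (q p : α → ℝ)
    (hq : ∀ a, 0 ≤ q a)
    (hp : ∀ a, 0 ≤ p a)
    (hqp : ∀ a, 0 < q a → 0 < p a)
    (π : α → β)
    (P : β → ℝ)
    (hP : ∀ b, P b = ∑ a ∈ Finset.univ.filter (fun a => π a = b), p a) :
    ∑ a, q a * Real.log (q a / P (π a)) ≤ ∑ a, q a * Real.log (q a / p a) := by
  have p_le_synset (a : α) : p a ≤ P (π a) := by
    rw [hP]
    exact le_sum_filter_fiber (Finset.mem_univ a) fun j _ _ => hp j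
  exact sum_mul_log_div_le_sum_mul_log_div_of_le (fun a _ => hq a) (fun a _ => hqp a)
    fun a _ => p_le_synset a

/-- The partial semantic KL divergence (against the synset
probabilities induced by a synonymous mapping `π`) is at most the classical
Kullback–Leibler divergence. Terms with `q a = 0` contribute `0` since
`0 * log _ = 0` in `ℝ`. -/
theorem partial_semantic_KL_le_KL
    {α β : Type*} [Fintype α] [Fintype β] [DecidableEq β]
    (q p : α → ℝ)
    (hq : ∀ a, 0 ≤ q a) (hqsum : ∑ a, q a = 1)
    (hp : ∀ a, 0 ≤ p a) (hpsum : ∑ a, p a = 1)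
    (hqp : ∀ a, 0 < q a → 0 < p a)
    (π : α → β)
    (P : β → ℝ)
    (hP : ∀ b, P b = ∑ a ∈ Finset.univ.filter (fun a => π a = b), p a) :
    ∑ a, q a * Real.log (q a / P (π a)) ≤ ∑ a, q a * Real.log (q a / p a) :=
  partial_semantic_KL_le_KL_general q p hq hp hqp π P hP
end

section
/- Let α be a finite type with probability mass function p, let ψ : α → β be a map into a finite type β (the deterministic encoder/decoder mapping X to the reconstruction X̂ = ψ(X)), and let f : α → γ and g : β → δ be maps into finite types (synonymous mappings). Let w be the joint pmf of (X, ψ(X)), i.e. w(a, b) = p a if b = ψ a and 0 otherwise, let p₂ be the pmf of ψ(X), and let Q be the pmf of g(ψ(X)) and P the pmf of f(X). Then H(Q) ≥ H(P) + H(Q) − H(w); equivalently, the joint entropy H(X, ψ(X)) = H(w) is at least the semantic entropy H_s(X̊) = H(P). (This is the paper's bound that the coding rate upper-bounds the down semantic mutual information, E[−log p(ŷ_s)] ≥ I_s(X̊; X̂̊).) -/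
open BigOperators

/-- Shannon entropy of a pmf on a finite type (convention `0 * log 0 = 0`
holds automatically in `ℝ`). -/
noncomputable def shannonEntropy {α : Type*} [Fintype α] (p : α → ℝ) : ℝ :=
  -∑ a, p a * Real.log (p a)

/-!
The law of `f(X)` is the pushforward of the joint law of `(X, Y)` along `(a, b) ↦ f a`. Merging
outcomes of total mass `S` replaces each `log (p a)` in the entropy by the larger `log S`, so a
pushforward never increases entropy, whether or not `Y` is a function of `X`.
-/

theorem negMulLog_sum_le_sum_negMulLog {ι : Type*} (s : Finset ι) {x : ι → ℝ}
    (hx : ∀ i ∈ s, 0 ≤ x i) :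
    Real.negMulLog (∑ i ∈ s, x i) ≤ ∑ i ∈ s, Real.negMulLog (x i) := by
  have mul_log_le : ∀ i ∈ s, x i * Real.log (x i) ≤ x i * Real.log (∑ j ∈ s, x j) := by
    intro i hi
    rcases (hx i hi).eq_or_lt with hzero | hpos
    · simp [← hzero]
    · have le_sum : x i ≤ ∑ j ∈ s, x j := Finset.single_le_sum hx hi
      exact mul_le_mul_of_nonneg_left (Real.log_le_log hpos le_sum) (hx i hi)
  simp only [Real.negMulLog_eq_neg, Finset.sum_neg_distrib, Finset.sum_mul]
  exact neg_le_neg (Finset.sum_le_sum mul_log_le)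

theorem shannonEntropy_eq_sum_negMulLog {α : Type*} [Fintype α] (p : α → ℝ) :
    shannonEntropy p = ∑ a, Real.negMulLog (p a) := by
  simp only [shannonEntropy, Real.negMulLog_eq_neg, Finset.sum_neg_distrib]

theorem shannonEntropy_map_le {α β : Type*} [Fintype α] [Fintype β] (f : α → β) {p : α → ℝ}
    (hp : 0 ≤ p) : shannonEntropy (FunOnFinite.map f p) ≤ shannonEntropy p := by
  classical
  simp only [shannonEntropy_eq_sum_negMulLog, FunOnFinite.map_apply_apply]
  calc ∑ b, Real.negMulLog (∑ a with f a = b, p a)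
      ≤ ∑ b, ∑ a with f a = b, Real.negMulLog (p a) :=
        Finset.sum_le_sum fun _ _ => negMulLog_sum_le_sum_negMulLog _ fun a _ => hp a
    _ = ∑ a, Real.negMulLog (p a) := Finset.sum_fiberwise _ f _

theorem funOnFinite_map_fst_apply {α β M : Type*} [Finite α] [Fintype β] [AddCommMonoid M]
    (w : α × β → M) (a : α) :
    FunOnFinite.map Prod.fst w a = ∑ b, w (a, b) := by
  classical
  have := Fintype.ofFinite α
  rw [FunOnFinite.map_apply_apply, Finset.sum_filter, Fintype.sum_prod_type_right]
  simp

theorem funOnFinite_map_snd_apply {α β M : Type*} [Fintype α] [Finite β] [AddCommMonoid M]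
    (w : α × β → M) (b : β) :
    FunOnFinite.map Prod.snd w b = ∑ a, w (a, b) := by
  classical
  have := Fintype.ofFinite β
  rw [FunOnFinite.map_apply_apply, Finset.sum_filter, Fintype.sum_prod_type]
  simp

theorem coding_rate_ge_down_semantic_MI_general
    {α β γ δ : Type*} [Fintype α] [Fintype β] [Fintype γ] [Fintype δ]
    {w : α × β → ℝ} (hw : 0 ≤ w) (f : α → γ) (g : β → δ) :
    shannonEntropy (FunOnFinite.map f (FunOnFinite.map Prod.fst w))
        + shannonEntropy (FunOnFinite.map g (FunOnFinite.map Prod.snd w)) - shannonEntropy w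
      ≤ shannonEntropy (FunOnFinite.map g (FunOnFinite.map Prod.snd w)) := by
  have map_marginal :
      FunOnFinite.map f (FunOnFinite.map Prod.fst w) = FunOnFinite.map (f ∘ Prod.fst) w :=
    (congrFun (FunOnFinite.map_comp f Prod.fst) w).symm
  rw [map_marginal]
  linarith [shannonEntropy_map_le (f ∘ Prod.fst) hw]

/-- For a deterministic reconstruction `ψ(X)` and synonymous
mappings `f` (on the source) and `g` (on the reconstruction), with
`P` the pmf of `f(X)`, `Q` the pmf of `g(ψ(X))`, and `w` the joint pmf of
`(X, ψ(X))`, we have `H(Q) ≥ H(P) + H(Q) − H(w)`; i.e. the joint entropy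
`H(w)` upper-bounds the semantic entropy `H(P)`
(the coding rate upper-bounds the down semantic mutual information). -/
theorem coding_rate_ge_down_semantic_MI
    {α β γ δ : Type*} [Fintype α] [Fintype β] [Fintype γ] [Fintype δ]
    [DecidableEq β] [DecidableEq γ] [DecidableEq δ]
    (p : α → ℝ) (hp : ∀ a, 0 ≤ p a) (hpsum : ∑ a, p a = 1)
    (ψ : α → β) (f : α → γ) (g : β → δ)
    (w : α × β → ℝ) (hw : ∀ a b, w (a, b) = if b = ψ a then p a else 0)
    (p₂ : β → ℝ) (hp₂ : ∀ b, p₂ b = ∑ a, w (a, b))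
    (Q : δ → ℝ)
    (hQ : ∀ d, Q d = ∑ b ∈ Finset.univ.filter (fun b => g b = d), p₂ b)
    (P : γ → ℝ)
    (hP : ∀ c, P c = ∑ a ∈ Finset.univ.filter (fun a => f a = c), p a) :
    shannonEntropy P + shannonEntropy Q - shannonEntropy w
      ≤ shannonEntropy Q := by
  have hw_nonneg : 0 ≤ w := by
    rintro ⟨a, b⟩
    rw [Pi.zero_apply, hw]
    split_ifs
    exacts [hp a, le_rfl]
  have hp_fst : p = FunOnFinite.map Prod.fst w :=
    funext fun a => by simp [funOnFinite_map_fst_apply, hw]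
  have hp₂_snd : p₂ = FunOnFinite.map Prod.snd w :=
    funext fun b => by rw [hp₂, funOnFinite_map_snd_apply]
  have hP_map : P = FunOnFinite.map f p :=
    funext fun c => by rw [hP, FunOnFinite.map_apply_apply]
  have hQ_map : Q = FunOnFinite.map g p₂ :=
    funext fun d => by rw [hQ, FunOnFinite.map_apply_apply]
  rw [hP_map, hQ_map, hp_fst, hp₂_snd]
  exact coding_rate_ge_down_semantic_MI_general hw_nonneg f g
end
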